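/- arXiv:1402.1282 — 4 statements merged into one kernel-verified Lean document; each statement's English description precedes it below -/
import Mathlib

section
/- Splitting map f_χ for the solution space (first part of the paper's Lemma on splitting the exact sequence): Let (V, W, f, G₊, G₋) be an abstract Green-hyperbolic operator with causal Green function G, and let (χ₊, χ₋) be an adapted partition of unity. Then for every ψ ∈ V_SC with f ψ = 0: f(χ₊ ψ) ∈ W₀, f(χ₊ ψ) = −f(χ₋ ψ), and G(f(χ₊ ψ)) = ψ. Hence f_χ : {v ∈ V_SC : f v = 0} → W₀, f_χ(ψ) = f(χ₊ ψ), is a well-defined linear map with G ∘ f_χ = id on {v ∈ V_SC : f v = 0}. -/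
/-- An abstract Green-hyperbolic operator: real vector spaces `V`, `W` with subspaces
of compactly supported (`0`), retarded (`p`), advanced (`m`) and spacelike compactly
supported (`SC`) elements, a linear map `f` preserving the supports, and retarded and
advanced Green functions `Gp`, `Gm` (defined on `Wp`, `Wm` respectively, here modeled
as linear maps on all of `W` whose defining properties are only imposed on `Wp`, `Wm`). -/
structure AGH (V : Type*) (W : Type*) [AddCommGroup V] [Module ℝ V]
    [AddCommGroup W] [Module ℝ W] where
  V0 : Submodule ℝ V
  Vp : Submodule ℝ V
  Vm : Submodule ℝ V
  VSC : Submodule ℝ V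
  W0 : Submodule ℝ W
  Wp : Submodule ℝ W
  Wm : Submodule ℝ W
  WSC : Submodule ℝ W
  hVp : Vp ≤ VSC
  hVm : Vm ≤ VSC
  hV0 : V0 = Vp ⊓ Vm
  hWp : Wp ≤ WSC
  hWm : Wm ≤ WSC
  hW0 : W0 = Wp ⊓ Wm
  f : V →ₗ[ℝ] W
  f_mem_p : ∀ v ∈ Vp, f v ∈ Wp
  f_mem_m : ∀ v ∈ Vm, f v ∈ Wm
  f_mem_sc : ∀ v ∈ VSC, f v ∈ WSC
  Gp : W →ₗ[ℝ] V
  Gm : W →ₗ[ℝ] V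
  Gp_mem : ∀ w ∈ Wp, Gp w ∈ Vp
  Gm_mem : ∀ w ∈ Wm, Gm w ∈ Vm
  Gp_f : ∀ v ∈ Vp, Gp (f v) = v
  Gm_f : ∀ v ∈ Vm, Gm (f v) = v
  f_Gp : ∀ w ∈ Wp, f (Gp w) = w
  f_Gm : ∀ w ∈ Wm, f (Gm w) = w

/-- The causal Green function `G = G₊ − G₋` (meaningful on `W₀ = Wp ⊓ Wm`). -/
def AGH.G {V W : Type*} [AddCommGroup V] [Module ℝ V] [AddCommGroup W] [Module ℝ W]
    (D : AGH V W) : W →ₗ[ℝ] V := D.Gp - D.Gm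

/-- An adapted partition of unity for an abstract Green-hyperbolic operator,
abstracting multiplication by a partition of unity adapted to a Cauchy surface. -/
structure AGH.Partition {V W : Type*} [AddCommGroup V] [Module ℝ V]
    [AddCommGroup W] [Module ℝ W] (D : AGH V W) where
  chiVp : V →ₗ[ℝ] V
  chiVm : V →ₗ[ℝ] V
  chiWp : W →ₗ[ℝ] W
  chiWm : W →ₗ[ℝ] W
  sumV : ∀ v ∈ D.VSC, chiVp v + chiVm v = v
  memVp : ∀ v ∈ D.VSC, chiVp v ∈ D.Vp
  memVm : ∀ v ∈ D.VSC, chiVm v ∈ D.Vm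
  sumW : ∀ w ∈ D.WSC, chiWp w + chiWm w = w
  memWp : ∀ w ∈ D.WSC, chiWp w ∈ D.Wp
  memWm : ∀ w ∈ D.WSC, chiWm w ∈ D.Wm

/-- Splitting map `f_χ` for the solution space: for every spacelike compactly supported
solution `ψ` of `f ψ = 0`, `f (χ₊ ψ)` is compactly supported, equals `−f (χ₋ ψ)`, and
`G (f (χ₊ ψ)) = ψ`; hence `f_χ ψ = f (χ₊ ψ)` is a well-defined linear map into `W₀`
with `G ∘ f_χ = id` on the solution space. -/
theorem statement1 {V W : Type*} [AddCommGroup V] [Module ℝ V]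
    [AddCommGroup W] [Module ℝ W] (D : AGH V W) (χ : AGH.Partition D) :
    ∀ ψ ∈ D.VSC, D.f ψ = 0 →
      D.f (χ.chiVp ψ) ∈ D.W0 ∧
      D.f (χ.chiVp ψ) = - D.f (χ.chiVm ψ) ∧
      D.G (D.f (χ.chiVp ψ)) = ψ := by
  intro ψ hψ h0
  have hs := χ.sumV ψ hψ
  have hp := χ.memVp ψ hψ
  have hm := χ.memVm ψ hψ
  have hneg : D.f (χ.chiVp ψ) = - D.f (χ.chiVm ψ) := by
    rw [eq_neg_iff_add_eq_zero, ← map_add, hs, h0]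
  refine ⟨?_, hneg, ?_⟩
  · rw [D.hW0]
    refine ⟨D.f_mem_p _ hp, ?_⟩
    rw [hneg]
    exact D.Wm.neg_mem (D.f_mem_m _ hm)
  · have h1 : D.Gm (D.f (χ.chiVp ψ)) = - χ.chiVm ψ := by
      rw [hneg, map_neg, D.Gm_f _ hm]
    rw [AGH.G, LinearMap.sub_apply, D.Gp_f _ hp, h1, sub_neg_eq_add, hs]
end

section
/- Alternative forms and nondegeneracy of the Green pairing (abstract form of the paper's Lemma on the Green pairing): Let (f, f*, B, B') be a compatible adjoint pair with causal Green functions G and G*. Set Sol = {v ∈ V_SC : f v = 0} and Sol* = {v ∈ V_SC : f* v = 0}. Then there is a unique bilinear map ⟨−,−⟩_G : Sol × Sol* → ℝ such that ⟨G α, G* β⟩_G = B(G α, β) for all α, β ∈ W₀ (that is, the right-hand side depends only on G α and G* β and not on the choice of α and β); this map also satisfies ⟨G α, G* β⟩_G = −B(G* β, α); and it is nondegenerate in both arguments. -/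
/-- A compatible adjoint pair: two abstract Green-hyperbolic operators `f` and `fs`
(for `f*`) on the same real vector spaces `V`, `W` with the same support subspaces,
each admitting an adapted partition of unity (here given by `chi` maps, which only
see the subspaces), with retarded/advanced Green functions `Gp`, `Gm` (for `f`) and
`Gsp`, `Gsm` (for `f*`), together with bilinear pairings `B` (abstracting the
integration pairing on `V_SC × W₀`) and `B'` (on `V₀ × W_SC`) satisfying the
adjointness, antisymmetry and nondegeneracy laws. All partially-defined maps are
modeled as linear maps on the full spaces whose defining properties are imposed
only on the relevant subspaces. -/
structure CAP (V : Type*) (W : Type*) [AddCommGroup V] [Module ℝ V]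
    [AddCommGroup W] [Module ℝ W] where
  V0 : Submodule ℝ V
  Vp : Submodule ℝ V
  Vm : Submodule ℝ V
  VSC : Submodule ℝ V
  W0 : Submodule ℝ W
  Wp : Submodule ℝ W
  Wm : Submodule ℝ W
  WSC : Submodule ℝ W
  hVp : Vp ≤ VSC
  hVm : Vm ≤ VSC
  hV0 : V0 = Vp ⊓ Vm
  hWp : Wp ≤ WSC
  hWm : Wm ≤ WSC
  hW0 : W0 = Wp ⊓ Wm
  f : V →ₗ[ℝ] W
  fs : V →ₗ[ℝ] W
  f_mem_p : ∀ v ∈ Vp, f v ∈ Wp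
  f_mem_m : ∀ v ∈ Vm, f v ∈ Wm
  f_mem_sc : ∀ v ∈ VSC, f v ∈ WSC
  fs_mem_p : ∀ v ∈ Vp, fs v ∈ Wp
  fs_mem_m : ∀ v ∈ Vm, fs v ∈ Wm
  fs_mem_sc : ∀ v ∈ VSC, fs v ∈ WSC
  Gp : W →ₗ[ℝ] V
  Gm : W →ₗ[ℝ] V
  Gsp : W →ₗ[ℝ] V
  Gsm : W →ₗ[ℝ] V
  Gp_mem : ∀ w ∈ Wp, Gp w ∈ Vp
  Gm_mem : ∀ w ∈ Wm, Gm w ∈ Vm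
  Gsp_mem : ∀ w ∈ Wp, Gsp w ∈ Vp
  Gsm_mem : ∀ w ∈ Wm, Gsm w ∈ Vm
  Gp_f : ∀ v ∈ Vp, Gp (f v) = v
  Gm_f : ∀ v ∈ Vm, Gm (f v) = v
  f_Gp : ∀ w ∈ Wp, f (Gp w) = w
  f_Gm : ∀ w ∈ Wm, f (Gm w) = w
  Gsp_fs : ∀ v ∈ Vp, Gsp (fs v) = v
  Gsm_fs : ∀ v ∈ Vm, Gsm (fs v) = v
  fs_Gsp : ∀ w ∈ Wp, fs (Gsp w) = w
  fs_Gsm : ∀ w ∈ Wm, fs (Gsm w) = w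
  chiVp : V →ₗ[ℝ] V
  chiVm : V →ₗ[ℝ] V
  chiWp : W →ₗ[ℝ] W
  chiWm : W →ₗ[ℝ] W
  chi_sumV : ∀ v ∈ VSC, chiVp v + chiVm v = v
  chi_memVp : ∀ v ∈ VSC, chiVp v ∈ Vp
  chi_memVm : ∀ v ∈ VSC, chiVm v ∈ Vm
  chi_sumW : ∀ w ∈ WSC, chiWp w + chiWm w = w
  chi_memWp : ∀ w ∈ WSC, chiWp w ∈ Wp
  chi_memWm : ∀ w ∈ WSC, chiWm w ∈ Wm
  B : V →ₗ[ℝ] W →ₗ[ℝ] ℝ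
  B' : V →ₗ[ℝ] W →ₗ[ℝ] ℝ
  adj1 : ∀ v ∈ VSC, ∀ u ∈ V0, B v (fs u) = B' u (f v)
  adj2 : ∀ v ∈ VSC, ∀ u ∈ V0, B v (f u) = B' u (fs v)
  skew : ∀ w ∈ W0, ∀ w' ∈ W0, B ((Gp - Gm) w) w' = - B ((Gsp - Gsm) w') w
  nd1 : ∀ v ∈ VSC, (∀ w ∈ W0, B v w = 0) → v = 0
  nd2 : ∀ w ∈ W0, (∀ v ∈ VSC, B v w = 0) → w = 0

variable {V W : Type*} [AddCommGroup V] [Module ℝ V] [AddCommGroup W] [Module ℝ W]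

/-- The causal Green function `G = G₊ − G₋` of `f`. -/
def CAP.G (P : CAP V W) : W →ₗ[ℝ] V := P.Gp - P.Gm

/-- The causal Green function `G* = G*₊ − G*₋` of `f*`. -/
def CAP.Gs (P : CAP V W) : W →ₗ[ℝ] V := P.Gsp - P.Gsm

/-- The space of spacelike compactly supported solutions of `f ψ = 0`. -/
def CAP.Sol (P : CAP V W) : Submodule ℝ V := P.VSC ⊓ LinearMap.ker P.f

/-- The space of spacelike compactly supported solutions of `f* ψ = 0`. -/
def CAP.SolS (P : CAP V W) : Submodule ℝ V := P.VSC ⊓ LinearMap.ker P.fs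

theorem CAP.G_surj (P : CAP V W) (x : V) (hx : x ∈ P.Sol) :
    P.f (P.chiVp x) ∈ P.W0 ∧ P.G (P.f (P.chiVp x)) = x := by
  obtain ⟨h1, h2⟩ := hx
  have h2 : P.f x = 0 := h2
  have hp := P.chi_memVp x h1
  have hm := P.chi_memVm x h1
  have hs := P.chi_sumV x h1
  have e : P.f (P.chiVp x) = P.f (-P.chiVm x) := by
    rw [map_neg, eq_neg_iff_add_eq_zero, ← map_add, hs, h2]
  have hm' := P.Vm.neg_mem hm
  refine ⟨?_, ?_⟩
  · rw [P.hW0]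
    exact ⟨P.f_mem_p _ hp, by rw [e]; exact P.f_mem_m _ hm'⟩
  · change P.Gp (P.f (P.chiVp x)) - P.Gm (P.f (P.chiVp x)) = x
    rw [P.Gp_f _ hp, e, P.Gm_f _ hm', sub_neg_eq_add, hs]

theorem CAP.G_mem (P : CAP V W) (w : W) (hw : w ∈ P.W0) : P.G w ∈ P.Sol := by
  rw [P.hW0] at hw
  refine ⟨P.VSC.sub_mem (P.hVp (P.Gp_mem _ hw.1)) (P.hVm (P.Gm_mem _ hw.2)), ?_⟩
  change P.f (P.Gp w - P.Gm w) = 0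
  rw [map_sub, P.f_Gp _ hw.1, P.f_Gm _ hw.2, sub_self]

theorem CAP.Gs_surj (P : CAP V W) (x : V) (hx : x ∈ P.SolS) :
    P.fs (P.chiVp x) ∈ P.W0 ∧ P.Gs (P.fs (P.chiVp x)) = x := by
  obtain ⟨h1, h2⟩ := hx
  have h2 : P.fs x = 0 := h2
  have hp := P.chi_memVp x h1
  have hm := P.chi_memVm x h1
  have hs := P.chi_sumV x h1
  have e : P.fs (P.chiVp x) = P.fs (-P.chiVm x) := by
    rw [map_neg, eq_neg_iff_add_eq_zero, ← map_add, hs, h2]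
  have hm' := P.Vm.neg_mem hm
  refine ⟨?_, ?_⟩
  · rw [P.hW0]
    exact ⟨P.fs_mem_p _ hp, by rw [e]; exact P.fs_mem_m _ hm'⟩
  · change P.Gsp (P.fs (P.chiVp x)) - P.Gsm (P.fs (P.chiVp x)) = x
    rw [P.Gsp_fs _ hp, e, P.Gsm_fs _ hm', sub_neg_eq_add, hs]

theorem CAP.Gs_mem (P : CAP V W) (w : W) (hw : w ∈ P.W0) : P.Gs w ∈ P.SolS := by
  rw [P.hW0] at hw
  refine ⟨P.VSC.sub_mem (P.hVp (P.Gsp_mem _ hw.1)) (P.hVm (P.Gsm_mem _ hw.2)), ?_⟩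
  change P.fs (P.Gsp w - P.Gsm w) = 0
  rw [map_sub, P.fs_Gsp _ hw.1, P.fs_Gsm _ hw.2, sub_self]

/-- Alternative forms and nondegeneracy of the Green pairing: there is a unique
bilinear map `⟨−,−⟩_G : Sol × Sol* → ℝ` with `⟨G α, G* β⟩_G = B (G α) β` for all
`α, β ∈ W₀`; it also satisfies `⟨G α, G* β⟩_G = − B (G* β) α`, and it is
nondegenerate in both arguments. -/
theorem statement5 (P : CAP V W) :
    (∃! Φ : P.Sol →ₗ[ℝ] P.SolS →ₗ[ℝ] ℝ,
      ∀ α ∈ P.W0, ∀ β ∈ P.W0, ∀ (x : P.Sol) (y : P.SolS),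
        (x : V) = P.G α → (y : V) = P.Gs β → Φ x y = P.B (P.G α) β) ∧
    (∀ Φ : P.Sol →ₗ[ℝ] P.SolS →ₗ[ℝ] ℝ,
      (∀ α ∈ P.W0, ∀ β ∈ P.W0, ∀ (x : P.Sol) (y : P.SolS),
        (x : V) = P.G α → (y : V) = P.Gs β → Φ x y = P.B (P.G α) β) →
      ((∀ α ∈ P.W0, ∀ β ∈ P.W0, ∀ (x : P.Sol) (y : P.SolS),
          (x : V) = P.G α → (y : V) = P.Gs β → Φ x y = - P.B (P.Gs β) α) ∧
       (∀ x : P.Sol, (∀ y : P.SolS, Φ x y = 0) → x = 0) ∧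
       (∀ y : P.SolS, (∀ x : P.Sol, Φ x y = 0) → y = 0))) := by
  have skew : ∀ α ∈ P.W0, ∀ β ∈ P.W0, P.B (P.G α) β = - P.B (P.Gs β) α := P.skew
  refine ⟨⟨(P.B.compl₂ (P.fs ∘ₗ P.chiVp)).domRestrict₁₂ P.Sol P.SolS, ?_, ?_⟩, ?_⟩
  · intro α hα β hβ x y hx hy
    change P.B (x : V) (P.fs (P.chiVp (y : V))) = _
    obtain ⟨h1, h2⟩ := P.Gs_surj y y.2
    rw [hx, skew _ hα _ h1, h2, hy, skew _ hα _ hβ]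
  · intro Ψ hΨ
    ext x y
    change Ψ x y = P.B (x : V) (P.fs (P.chiVp (y : V)))
    obtain ⟨h1, h2⟩ := P.Gs_surj y y.2
    obtain ⟨h3, h4⟩ := P.G_surj x x.2
    rw [hΨ _ h3 _ h1 x y h4.symm h2.symm, h4]
  · intro Φ hΦ
    refine ⟨?_, ?_, ?_⟩
    · intro α hα β hβ x y hx hy
      rw [hΦ α hα β hβ x y hx hy, skew α hα β hβ]
    · intro x hx
      obtain ⟨h3, h4⟩ := P.G_surj x x.2
      apply Subtype.ext
      refine P.nd1 x x.2.1 fun β hβ => ?_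
      have := hΦ _ h3 β hβ x ⟨P.Gs β, P.Gs_mem β hβ⟩ h4.symm rfl
      rw [hx, h4] at this
      exact this.symm
    · intro y hy
      obtain ⟨h3, h4⟩ := P.Gs_surj y y.2
      apply Subtype.ext
      refine P.nd1 y y.2.1 fun α hα => ?_
      have := hΦ α hα _ h3 ⟨P.G α, P.G_mem α hα⟩ y rfl h4.symm
      rw [hy, skew α hα _ h3, h4] at this
      linarith
end

section
/- Nondegeneracy of the natural pairing between the formal solutions tangent and cotangent spaces, without constraints or gauge (the paper's Lemma in the section on formal T and T* for solutions): Let (f, f*, B, B') be a compatible adjoint pair. Define the formal solutions tangent space T = {v ∈ V_SC : f v = 0} and the formal solutions cotangent space T* = W₀ / f*(V₀). Then the bilinear map T × T* → ℝ, (ψ, [α]) ↦ B(ψ, α), is well-defined and nondegenerate in both arguments. -/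
variable {V W : Type*} [AddCommGroup V] [Module ℝ V] [AddCommGroup W] [Module ℝ W]

/-- Nondegeneracy of the natural pairing between the formal solutions tangent space
`T = {v ∈ V_SC : f v = 0}` and cotangent space `T* = W₀ / f*(V₀)` (no constraints or
gauge): the pairing `(ψ, [α]) ↦ B ψ α` is well-defined and nondegenerate in both
arguments (nondegeneracy in the second argument is expressed as: if `B ψ α = 0` for
all solutions `ψ`, then `α` represents `0` in the quotient, i.e. `α ∈ f*(V₀)`). -/
theorem statement6 (P : CAP V W) :
    (∀ ψ ∈ P.VSC, P.f ψ = 0 →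
      ∀ α ∈ P.W0, ∀ α' ∈ P.W0, (∃ u ∈ P.V0, α - α' = P.fs u) →
        P.B ψ α = P.B ψ α') ∧
    (∀ ψ ∈ P.VSC, P.f ψ = 0 → (∀ α ∈ P.W0, P.B ψ α = 0) → ψ = 0) ∧
    (∀ α ∈ P.W0, (∀ ψ ∈ P.VSC, P.f ψ = 0 → P.B ψ α = 0) →
      ∃ u ∈ P.V0, α = P.fs u) := by
  refine ⟨?_, fun ψ hψ _ h => P.nd1 ψ hψ h, ?_⟩
  · rintro ψ hψ hf α _ α' _ ⟨u, hu, h⟩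
    have h1 := P.adj1 ψ hψ u hu
    rw [← h, hf, map_zero, map_sub] at h1
    exact sub_eq_zero.mp h1
  · intro α hα h
    have hW : ∀ w ∈ P.W0, w ∈ P.Wp ∧ w ∈ P.Wm := by
      intro w hw
      rw [P.hW0] at hw
      exact hw
    obtain ⟨hp, hm⟩ := hW α hα
    have hG : (P.Gsp - P.Gsm) α = 0 := by
      apply P.nd1
      · exact P.VSC.sub_mem (P.hVp (P.Gsp_mem α hp)) (P.hVm (P.Gsm_mem α hm))
      · intro w hw
        obtain ⟨wp, wm⟩ := hW w hw
        have h1 := P.skew w hw α hα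
        rw [h ((P.Gp - P.Gm) w)
          (P.VSC.sub_mem (P.hVp (P.Gp_mem w wp)) (P.hVm (P.Gm_mem w wm)))
          (by rw [LinearMap.sub_apply, map_sub, P.f_Gp w wp, P.f_Gm w wm, sub_self])] at h1
        linarith
    have he : P.Gsp α = P.Gsm α := sub_eq_zero.mp hG
    refine ⟨P.Gsp α, ?_, (P.fs_Gsp α hp).symm⟩
    rw [P.hV0]
    exact ⟨P.Gsp_mem α hp, he ▸ P.Gsm_mem α hm⟩
end

section
/- Nondegeneracy of the natural pairing between the formal gauge invariant solutions tangent and cotangent spaces (the paper's main Lemma on T and T* for solutions with constraints and gauge): Let (f, f*, B, B') be a compatible adjoint pair and let globally recognizable abstract gauge data over (V_SC, W₀, B) be given. Let abstract constraint data be given: real vector spaces X, Λ₀, Y'₀, Y''; linear maps c : V_SC → X (linearized constraints), c⋆ : Λ₀ → W₀ (adjoint constraints), ρ : Y'₀ → W₀ (constraint parametrization) and ρ⋆ : V_SC → Y'' (its adjoint); and bilinear maps F : Y'₀ × Y'' → ℝ and F_c : X × Λ₀ → ℝ; such that: (1) c(G(ρ y)) = 0 for all y ∈ Y'₀; (2)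 B(G(ρ y), w) = −F(y, ρ⋆(G* w)) for all y ∈ Y'₀ and w ∈ W₀; (3) if F(y, ρ⋆(G* w)) = 0 for all y ∈ Y'₀ then ρ⋆(G* w) = 0; (4) B(v, c⋆ λ) = F_c(c v, λ) for all v ∈ V_SC and λ ∈ Λ₀; and (5) [global parametrizability] for every w ∈ W₀ with ρ⋆(G* w) = 0, if B(ψ, w) = 0 for every ψ ∈ V_SC with f ψ = 0 and c ψ = 0, then there exists λ ∈ Λ₀ with G* w = G*(c⋆ λ). Define Sol = {ψ ∈ V_SC : f ψ = 0 and c ψ = 0}, N = f*(V₀) + c⋆(Λ₀) ⊆ W₀, T̄ = Sol / (Sol ∩ g(P_SC)) and T̄* = {α ∈ W₀ : g⋆ α ∈ g⋆(N)} / N. Then the bilinear map T̄ × T̄* → ℝ, ([ψ], [α]) ↦ B(ψ, α), is well-defined and nondegenerate in both arguments. -/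
variable {V W : Type*} [AddCommGroup V] [Module ℝ V] [AddCommGroup W] [Module ℝ W]

/-- Nondegeneracy of the natural pairing between the formal gauge invariant solutions
tangent space `T̄ = Sol / (Sol ∩ g(P_SC))` and cotangent space
`T̄* = {α ∈ W₀ : g⋆ α ∈ g⋆(N)} / N`, where `Sol = {ψ ∈ V_SC : f ψ = 0, c ψ = 0}` and
`N = f*(V₀) + c⋆(Λ₀)`, given a compatible adjoint pair, globally recognizable abstract
gauge data and globally parametrizable abstract constraint data. The pairing
`([ψ], [α]) ↦ B ψ α` is well-defined and nondegenerate in both arguments. -/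
theorem statement8 {PSC Z0 USC Q0 X L0 Y1 Y2 : Type*}
    [AddCommGroup PSC] [Module ℝ PSC] [AddCommGroup Z0] [Module ℝ Z0]
    [AddCommGroup USC] [Module ℝ USC] [AddCommGroup Q0] [Module ℝ Q0]
    [AddCommGroup X] [Module ℝ X] [AddCommGroup L0] [Module ℝ L0]
    [AddCommGroup Y1] [Module ℝ Y1] [AddCommGroup Y2] [Module ℝ Y2]
    (P : CAP V W)
    -- abstract gauge data over (V_SC, W₀, B):
    (g : PSC →ₗ[ℝ] V) (hg : ∀ ε : PSC, g ε ∈ P.VSC)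
    (gs : W →ₗ[ℝ] Z0)
    (g' : V →ₗ[ℝ] USC)
    (g's : Q0 →ₗ[ℝ] W) (hg's : ∀ τ : Q0, g's τ ∈ P.W0)
    (hgg' : ∀ ε : PSC, g' (g ε) = 0)
    (hgsg's : ∀ τ : Q0, gs (g's τ) = 0)
    (Db : PSC →ₗ[ℝ] Z0 →ₗ[ℝ] ℝ) (Eb : USC →ₗ[ℝ] Q0 →ₗ[ℝ] ℝ)
    (hDb : ∀ ε : PSC, ∀ w ∈ P.W0, P.B (g ε) w = Db ε (gs w))
    (hEb : ∀ v ∈ P.VSC, ∀ τ : Q0, P.B v (g's τ) = Eb (g' v) τ)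
    (hEnd : ∀ v ∈ P.VSC, (∀ τ : Q0, Eb (g' v) τ = 0) → g' v = 0)
    -- global recognizability of the gauge data:
    (hrec1 : ∀ v ∈ P.VSC, g' v = 0 →
      (∀ w ∈ P.W0, gs w = 0 → P.B v w = 0) → ∃ ε : PSC, v = g ε)
    (hrec2 : ∀ w ∈ P.W0, gs w = 0 →
      (∀ v ∈ P.VSC, g' v = 0 → P.B v w = 0) → ∃ τ : Q0, w = g's τ)
    -- abstract constraint data:
    (c : V →ₗ[ℝ] X)
    (cs : L0 →ₗ[ℝ] W) (hcs : ∀ l : L0, cs l ∈ P.W0)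
    (ρ : Y1 →ₗ[ℝ] W) (hρ : ∀ y : Y1, ρ y ∈ P.W0)
    (ρs : V →ₗ[ℝ] Y2)
    (F : Y1 →ₗ[ℝ] Y2 →ₗ[ℝ] ℝ) (Fc : X →ₗ[ℝ] L0 →ₗ[ℝ] ℝ)
    (h1 : ∀ y : Y1, c (P.G (ρ y)) = 0)
    (h2 : ∀ y : Y1, ∀ w ∈ P.W0, P.B (P.G (ρ y)) w = - F y (ρs (P.Gs w)))
    (h3 : ∀ w ∈ P.W0, (∀ y : Y1, F y (ρs (P.Gs w)) = 0) → ρs (P.Gs w) = 0)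
    (h4 : ∀ v ∈ P.VSC, ∀ l : L0, P.B v (cs l) = Fc (c v) l)
    -- global parametrizability:
    (h5 : ∀ w ∈ P.W0, ρs (P.Gs w) = 0 →
      (∀ ψ ∈ P.VSC, P.f ψ = 0 → c ψ = 0 → P.B ψ w = 0) →
      ∃ l : L0, P.Gs w = P.Gs (cs l)) :
    -- the pairing ([ψ], [α]) ↦ B ψ α on T̄ × T̄* is well-defined:
    (∀ ψ ∈ P.VSC, P.f ψ = 0 → c ψ = 0 →
     ∀ ψ' ∈ P.VSC, P.f ψ' = 0 → c ψ' = 0 →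
     ∀ α ∈ P.W0, (∃ u ∈ P.V0, ∃ l : L0, gs α = gs (P.fs u + cs l)) →
     ∀ α' ∈ P.W0, (∃ u ∈ P.V0, ∃ l : L0, gs α' = gs (P.fs u + cs l)) →
     (∃ ε : PSC, ψ - ψ' = g ε) →
     (∃ u ∈ P.V0, ∃ l : L0, α - α' = P.fs u + cs l) →
     P.B ψ α = P.B ψ' α') ∧
    -- nondegeneracy in the first argument:
    (∀ ψ ∈ P.VSC, P.f ψ = 0 → c ψ = 0 →
     (∀ α ∈ P.W0, (∃ u ∈ P.V0, ∃ l : L0, gs α = gs (P.fs u + cs l)) →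
        P.B ψ α = 0) →
     ∃ ε : PSC, ψ = g ε) ∧
    -- nondegeneracy in the second argument:
    (∀ α ∈ P.W0, (∃ u ∈ P.V0, ∃ l : L0, gs α = gs (P.fs u + cs l)) →
     (∀ ψ ∈ P.VSC, P.f ψ = 0 → c ψ = 0 → P.B ψ α = 0) →
     ∃ u ∈ P.V0, ∃ l : L0, α = P.fs u + cs l) := by
  have hfs : ∀ u ∈ P.V0, P.fs u ∈ P.W0 := by
    intro u hu
    rw [P.hV0] at hu
    rw [P.hW0]
    exact ⟨P.fs_mem_p u hu.1, P.fs_mem_m u hu.2⟩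
  have hN : ∀ ψ ∈ P.VSC, P.f ψ = 0 → c ψ = 0 → ∀ u ∈ P.V0, ∀ l : L0,
      P.B ψ (P.fs u + cs l) = 0 := by
    intro ψ hψ hf hc u hu l
    rw [map_add, P.adj1 ψ hψ u hu, h4 ψ hψ, hf, hc]
    simp
  refine ⟨?_, ?_, ?_⟩
  · rintro ψ hψ hf hc ψ' hψ' hf' hc' α hα ⟨u, hu, l, hgα⟩ α' hα' - ⟨ε, hε⟩ ⟨u', hu', l', hα2⟩
    have e1 : P.B (ψ - ψ') α = 0 := by
      rw [hε, hDb ε α hα, hgα, ← hDb ε _ (P.W0.add_mem (hfs u hu) (hcs l)), ← hε]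
      exact hN _ (P.VSC.sub_mem hψ hψ') (by rw [map_sub, hf, hf', sub_zero])
        (by rw [map_sub, hc, hc', sub_zero]) u hu l
    have e2 : P.B ψ' (α - α') = 0 := by
      rw [hα2]
      exact hN ψ' hψ' hf' hc' u' hu' l'
    rw [map_sub, LinearMap.sub_apply] at e1
    rw [map_sub] at e2
    linarith
  · intro ψ hψ hf hc h
    have key : ∀ w ∈ P.W0, gs w = 0 → P.B ψ w = 0 := fun w hw h0 =>
      h w hw ⟨0, P.V0.zero_mem, 0, by simp [h0]⟩
    refine hrec1 ψ hψ (hEnd ψ hψ fun τ => ?_) key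
    rw [← hEb ψ hψ τ]
    exact key _ (hg's τ) (hgsg's τ)
  · intro α hα _ h
    have hy : ∀ y : Y1, F y (ρs (P.Gs α)) = 0 := by
      intro y
      have hw := hρ y
      rw [P.hW0] at hw
      have h0 := h (P.G (ρ y))
        (P.VSC.sub_mem (P.hVp (P.Gp_mem _ hw.1)) (P.hVm (P.Gm_mem _ hw.2)))
        (by
          change P.f (P.Gp (ρ y) - P.Gm (ρ y)) = 0
          rw [map_sub, P.f_Gp _ hw.1, P.f_Gm _ hw.2, sub_self]) (h1 y)
      rw [h2 y α hα] at h0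
      linarith
    obtain ⟨l, hl⟩ := h5 α hα (h3 α hα hy) h
    have hm : α - cs l ∈ P.W0 := P.W0.sub_mem hα (hcs l)
    have hz : P.Gs (α - cs l) = 0 := by rw [map_sub, hl, sub_self]
    rw [P.hW0] at hm
    have he : P.Gsp (α - cs l) = P.Gsm (α - cs l) := sub_eq_zero.mp hz
    refine ⟨P.Gsp (α - cs l), ?_, l, ?_⟩
    · rw [P.hV0]
      exact ⟨P.Gsp_mem _ hm.1, he ▸ P.Gsm_mem _ hm.2⟩
    · rw [P.fs_Gsp _ hm.1, sub_add_cancel]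
end
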